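/- For every fixed ε > 0 there exists a constant β₀ = β₀(ε) > 0 such that for every 0 < β ≤ β₀ and every edge-probability function p(n) ≥ ln n / n the following holds with high probability for G sampled from G(n,p), with t = np/100, G₁ = G[V ∖ D_t(G)] the induced subgraph on the vertices of degree at least t, and n₁ = |V ∖ D_t(G)|: for every spanning subgraph H₁ ⊆ G₁ satisfying d_{H₁}(v) ≤ (1/3 − ε)·d_G(v) for every vertex v of G₁, the graph G₁ − H₁ is (n₁, np, β)-quasi-random. -/

import Mathlib

open Filter Finset SimpleGraph
open scoped Classical

/-- The probability weight of a particular graph `G` on `[n]` under `G(n,p)`. -/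
noncomputable def gnpWeight (n : ℕ) (p : ℝ) (G : SimpleGraph (Fin n)) : ℝ :=
  p ^ G.edgeFinset.card * (1 - p) ^ (n.choose 2 - G.edgeFinset.card)

/-- The probability that a random graph `G ~ G(n,p)` satisfies the predicate `A`. -/
noncomputable def gnpProb (n : ℕ) (p : ℝ) (A : SimpleGraph (Fin n) → Prop) : ℝ :=
  ∑ G : SimpleGraph (Fin n), if A G then gnpWeight n p G else 0

/-- A sequence of graph properties holds with high probability in `G(n, p n)`. -/
def WHP (p : ℕ → ℝ) (A : ∀ n : ℕ, SimpleGraph (Fin n) → Prop) : Prop :=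
  Tendsto (fun n => gnpProb n (p n) (A n)) atTop (nhds 1)

/-- Number of edges of a graph. -/
noncomputable def edgeCount {V : Type*} [Fintype V] (G : SimpleGraph V) : ℕ :=
  G.edgeFinset.card

/-- Number of edges with both endpoints in `U`. -/
noncomputable def eIn {V : Type*} [Fintype V] (G : SimpleGraph V) (U : Finset V) : ℕ :=
  (G.edgeFinset.filter (fun e => ∀ v ∈ e, v ∈ U)).card

/-- Number of edges with one endpoint in `U` and the other in `Z` (for disjoint `U`, `Z`). -/
noncomputable def eBetween {V : Type*} [Fintype V] (G : SimpleGraph V) (U Z : Finset V) : ℕ :=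
  ((U ×ˢ Z).filter (fun q => G.Adj q.1 q.2)).card

/-- External neighbourhood of a vertex set. -/
noncomputable def extNbhd {V : Type*} [Fintype V] (G : SimpleGraph V) (U : Finset V) : Finset V :=
  Finset.univ.filter (fun v => v ∉ U ∧ ∃ u ∈ U, G.Adj u v)

/-- `G` is an `(R, f)`-expander: every set `U` with `|U| ≤ R` satisfies `|N(U)| ≥ f(|U|)·|U|`. -/
def IsExpander {V : Type*} [Fintype V] (G : SimpleGraph V) (R : ℝ) (f : ℕ → ℝ) : Prop :=
  ∀ U : Finset V, U.Nonempty → (U.card : ℝ) ≤ R →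
    f U.card * U.card ≤ ((extNbhd G U).card : ℝ)

/-- The expansion function `f_β` on `{1, …, ⌊β n₁⌋}`. -/
noncomputable def fBeta (β : ℝ) (n1 : ℕ) (t : ℕ) : ℝ :=
  if t = Nat.floor (β * n1) then 2 * (1 + 39 * β) / (3 * β)
  else if (t : ℝ) < (n1 : ℝ) ^ (0.1 : ℝ) then Real.log n1 ^ (0.8 : ℝ)
  else 11

/-- `G₁` is `(n₁, d, β)`-quasi-random. -/
def QuasiRandom {V : Type*} [Fintype V] (G1 : SimpleGraph V) (n1 : ℕ) (d β : ℝ) : Prop :=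
  (∀ v : V, d / 150 ≤ (G1.degree v : ℝ)) ∧
  (∀ U : Finset V, (U.card : ℝ) < (n1 : ℝ) ^ (0.11 : ℝ) * Real.log n1 →
    (eIn G1 U : ℝ) ≤ d ^ (0.13 : ℝ) * U.card) ∧
  (∀ U : Finset V, (U.card : ℝ) < 12 * β * n1 →
    (eIn G1 U : ℝ) ≤ 50 * β * d * U.card) ∧
  (∀ U Z : Finset V, Disjoint U Z → U.card = Nat.floor (β * n1) →
    Z.card = Nat.floor ((1 / 3 - 27 * β) * n1) →
    (n1 : ℝ) * Real.log (Real.log n1) ≤ (eBetween G1 U Z : ℝ))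

/-- Longest path length in `G`. -/
noncomputable def longestPath {V : Type*} [Fintype V] (G : SimpleGraph V) : ℕ :=
  sSup {l : ℕ | ∃ (u v : V) (q : G.Walk u v), q.IsPath ∧ q.length = l}

/-- `{u, v}` is a booster with respect to `Γ`. -/
def IsBooster {V : Type*} [Fintype V] (Γ : SimpleGraph V) (u v : V) : Prop :=
  u ≠ v ∧ ¬ Γ.Adj u v ∧
    ((Γ ⊔ fromEdgeSet {s(u, v)}).IsHamiltonian ∨
      longestPath Γ < longestPath (Γ ⊔ fromEdgeSet {s(u, v)}))

/-- The booster set `B_Γ(v)`. -/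
noncomputable def boosterSet {V : Type*} [Fintype V] (Γ : SimpleGraph V) (v : V) : Finset V :=
  Finset.univ.filter (fun w => IsBooster Γ v w)

/-- Membership in the family `𝓛(n, β)` with witnessing partition `V = V₁ ∪ D`. -/
def InFamilyL (n : ℕ) (β : ℝ) (G : SimpleGraph (Fin n)) (V1 D : Finset (Fin n)) : Prop :=
  Disjoint V1 D ∧ V1 ∪ D = Finset.univ ∧
  ((D.card : ℝ) ≤ (n : ℝ) ^ (0.09 : ℝ)) ∧
  (∀ u ∈ D, 2 ≤ (G.neighborFinset u ∩ V1).card) ∧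
  (∀ u ∈ D, ∀ v ∈ D, ∀ q : G.Walk u v, q.IsPath → 0 < q.length →
    2 * Real.log n / (3 * Real.log (Real.log n)) < (q.length : ℝ)) ∧
  (∀ u ∈ D, ∀ q : G.Walk u u, q.IsCycle →
    2 * Real.log n / (3 * Real.log (Real.log n)) < (q.length : ℝ)) ∧
  IsExpander (G.induce (V1 : Set (Fin n))) (β * V1.card) (fBeta β V1.card)

/-- The set `D_t(G)` of vertices of degree less than `t`. -/
noncomputable def lowDegSet (n : ℕ) (t : ℝ) (G : SimpleGraph (Fin n)) : Finset (Fin n) :=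
  Finset.univ.filter (fun v => (G.degree v : ℝ) < t)

/-!
Union bounds based on Chernoff's inequality show that in a typical `G(n,p)` no vertex has two
neighbours of degree below `np/100`, small vertex sets are sparse, and the number of edges between
linear sized sets is close to its mean. Quasi-randomness of `G₁ - H₁` follows deterministically. A
vertex of `G₁` loses at most one neighbour with the low degree vertices and at most a third of its
degree with `H₁`; sparsity passes to subgraphs; and when a sparse set `U` of linear size is compared
with a set `Z` of almost `n/3` vertices, the cut has about `|U|np/3` edges, while `H₁` takes at most
a `1/3 - ε` fraction of the degree sum of `U`, which is about `|U|np`.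
-/

section Probability

variable {n : ℕ} {p : ℝ}

lemma gnpWeight_nonneg (hp : p ∈ Set.Icc (0 : ℝ) 1) (G : SimpleGraph (Fin n)) :
    0 ≤ gnpWeight n p G :=
  mul_nonneg (pow_nonneg hp.1 _) (pow_nonneg (sub_nonneg.2 hp.2) _)

-- Expanding the product over all pairs gives one term for every edge set.
lemma sum_gnpWeight_mul_prod (n : ℕ) (p : ℝ) (f g : Sym2 (Fin n) → ℝ) :
    ∑ G : SimpleGraph (Fin n), gnpWeight n p G *
        ((∏ e ∈ G.edgeFinset, f e) *
          ∏ e ∈ (⊤ : SimpleGraph (Fin n)).edgeFinset \ G.edgeFinset, g e) =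
      ∏ e ∈ (⊤ : SimpleGraph (Fin n)).edgeFinset, (p * f e + (1 - p) * g e) := by
  have edgeFinset_subset (G : SimpleGraph (Fin n)) :
      G.edgeFinset ⊆ (⊤ : SimpleGraph (Fin n)).edgeFinset := edgeFinset_mono le_top
  rw [prod_add]
  refine sum_bij' (fun G _ ↦ G.edgeFinset) (fun s _ ↦ fromEdgeSet (s : Set (Sym2 (Fin n))))
    (fun G _ ↦ mem_powerset.2 (edgeFinset_subset G)) (fun _ _ ↦ mem_univ _)
    (fun G _ ↦ by simp) (fun s hs ↦ ?_) (fun G _ ↦ ?_)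
  · rw [← coe_inj, coe_edgeFinset, edgeSet_fromEdgeSet, sdiff_eq_left, Set.disjoint_left]
    intro e he
    simpa using mem_powerset.1 hs he
  · simp only [prod_mul_distrib, prod_const, gnpWeight]
    rw [card_sdiff_of_subset (edgeFinset_subset G), card_edgeFinset_top_eq_card_choose_two,
      Fintype.card_fin]
    ring

lemma sum_gnpWeight (n : ℕ) (p : ℝ) : ∑ G : SimpleGraph (Fin n), gnpWeight n p G = 1 := by
  simpa using sum_gnpWeight_mul_prod n p 1 1

lemma gnpProb_eq_sum_mul_ite (A : SimpleGraph (Fin n) → Prop) :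
    gnpProb n p A = ∑ G, gnpWeight n p G * if A G then 1 else 0 := by
  simp only [gnpProb, mul_ite, mul_one, mul_zero]

lemma gnpProb_le_sum_gnpWeight_mul (hp : p ∈ Set.Icc (0 : ℝ) 1) {A : SimpleGraph (Fin n) → Prop}
    {F : SimpleGraph (Fin n) → ℝ} (hF : ∀ G, 0 ≤ F G) (hA : ∀ G, A G → 1 ≤ F G) :
    gnpProb n p A ≤ ∑ G, gnpWeight n p G * F G := by
  rw [gnpProb_eq_sum_mul_ite]
  refine sum_le_sum fun G _ ↦ mul_le_mul_of_nonneg_left ?_ (gnpWeight_nonneg hp G)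
  split_ifs with h
  exacts [hA G h, hF G]

lemma gnpProb_le_one (hp : p ∈ Set.Icc (0 : ℝ) 1) (A : SimpleGraph (Fin n) → Prop) :
    gnpProb n p A ≤ 1 := by
  simpa [sum_gnpWeight] using
    gnpProb_le_sum_gnpWeight_mul hp (A := A) (F := fun _ ↦ 1) (by simp) (by simp)

lemma gnpProb_mono (hp : p ∈ Set.Icc (0 : ℝ) 1) {A B : SimpleGraph (Fin n) → Prop}
    (h : ∀ G, A G → B G) : gnpProb n p A ≤ gnpProb n p B := by
  rw [gnpProb_eq_sum_mul_ite B]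
  exact gnpProb_le_sum_gnpWeight_mul hp (fun G ↦ by split_ifs <;> simp)
    fun G hG ↦ by simp [h G hG]

lemma gnpProb_add_gnpProb_not (A : SimpleGraph (Fin n) → Prop) :
    gnpProb n p A + gnpProb n p (fun G ↦ ¬ A G) = 1 := by
  rw [gnpProb, gnpProb, ← sum_add_distrib, ← sum_gnpWeight n p]
  exact sum_congr rfl fun G _ ↦ by by_cases h : A G <;> simp [h]

lemma gnpProb_or_le (hp : p ∈ Set.Icc (0 : ℝ) 1) (A B : SimpleGraph (Fin n) → Prop) :
    gnpProb n p (fun G ↦ A G ∨ B G) ≤ gnpProb n p A + gnpProb n p B := by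
  rw [gnpProb_eq_sum_mul_ite A, gnpProb_eq_sum_mul_ite B, ← sum_add_distrib]
  simp only [← mul_add]
  refine gnpProb_le_sum_gnpWeight_mul hp (fun G ↦ ?_) fun G hG ↦ ?_
  · split_ifs <;> norm_num
  · rcases hG with h | h <;> simp only [h, if_true] <;> split_ifs <;> norm_num

lemma gnpProb_exists_le_sum (hp : p ∈ Set.Icc (0 : ℝ) 1) {ι : Type*} [Fintype ι]
    (A : ι → SimpleGraph (Fin n) → Prop) :
    gnpProb n p (fun G ↦ ∃ i, A i G) ≤ ∑ i, gnpProb n p (A i) := by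
  simp only [gnpProb_eq_sum_mul_ite (A _)]
  rw [sum_comm]
  simp only [← mul_sum]
  have indicator_nonneg (G : SimpleGraph (Fin n)) (i : ι) : (0 : ℝ) ≤ if A i G then 1 else 0 := by
    split_ifs <;> norm_num
  refine gnpProb_le_sum_gnpWeight_mul hp (fun G ↦ sum_nonneg fun i _ ↦ indicator_nonneg G i) ?_
  rintro G ⟨i, hi⟩
  simpa [hi] using single_le_sum (fun j _ ↦ indicator_nonneg G j) (mem_univ i)

lemma gnpProb_exists_le_card_mul (hp : p ∈ Set.Icc (0 : ℝ) 1) {ι : Type*} [Fintype ι] {c : ℝ}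
    {A : ι → SimpleGraph (Fin n) → Prop} (h : ∀ i, gnpProb n p (A i) ≤ c) :
    gnpProb n p (fun G ↦ ∃ i, A i G) ≤ Fintype.card ι * c := by
  simpa using (gnpProb_exists_le_sum hp A).trans (sum_le_card_nsmul univ _ c fun i _ ↦ h i)

lemma gnpProb_const_and_le {q : Prop} {A : SimpleGraph (Fin n) → Prop} {c : ℝ} (hc : 0 ≤ c)
    (h : q → gnpProb n p A ≤ c) : gnpProb n p (fun G ↦ q ∧ A G) ≤ c := by
  by_cases hq : q
  · simpa only [hq, true_and] using h hq
  · simpa [gnpProb, hq] using hc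

lemma prod_sdiff_ite_mem {α : Type*} [DecidableEq α] {s t : Finset α} (hts : t ⊆ s) (u : Finset α) :
    ∏ e ∈ s \ u, (if e ∈ t then (0 : ℝ) else 1) = if t ⊆ u then 1 else 0 := by
  split_ifs with h
  · exact prod_eq_one fun e he ↦ if_neg fun het ↦ (mem_sdiff.1 he).2 (h het)
  · obtain ⟨e, het, heu⟩ := not_subset.1 h
    exact prod_eq_zero (mem_sdiff.2 ⟨hts het, heu⟩) (if_pos het)

-- Only the independence of the pairs in `S ∪ T` enters: the bound is the product over these pairs
-- of `p` (on `T`) and `1 + p * (exp s - 1) ≤ exp (p * (exp s - 1))` (on `S`).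
lemma sum_gnpWeight_mul_ite_exp_le (hp : p ∈ Set.Icc (0 : ℝ) 1) {S T : Finset (Sym2 (Fin n))}
    (hS : S ⊆ (⊤ : SimpleGraph (Fin n)).edgeFinset) (hT : T ⊆ (⊤ : SimpleGraph (Fin n)).edgeFinset)
    (hST : Disjoint S T) (s : ℝ) :
    ∑ G : SimpleGraph (Fin n), gnpWeight n p G *
        (if T ⊆ G.edgeFinset then Real.exp (s * #(G.edgeFinset ∩ S)) else 0) ≤
      p ^ #T * Real.exp (p * (Real.exp s - 1) * #S) := by
  set f : Sym2 (Fin n) → ℝ := fun e ↦ if e ∈ S then Real.exp s else 1 with hf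
  set g : Sym2 (Fin n) → ℝ := fun e ↦ if e ∈ T then 0 else 1 with hg
  have prod_f (G : SimpleGraph (Fin n)) :
      ∏ e ∈ G.edgeFinset, f e = Real.exp (s * #(G.edgeFinset ∩ S)) := by
    rw [hf, prod_ite_mem, prod_const, ← Real.exp_nat_mul, mul_comm]
  have prod_g (G : SimpleGraph (Fin n)) :
      ∏ e ∈ (⊤ : SimpleGraph (Fin n)).edgeFinset \ G.edgeFinset, g e =
        if T ⊆ G.edgeFinset then 1 else 0 := prod_sdiff_ite_mem hT _
  calc ∑ G : SimpleGraph (Fin n), gnpWeight n p G *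
        (if T ⊆ G.edgeFinset then Real.exp (s * #(G.edgeFinset ∩ S)) else 0)
      = ∏ e ∈ (⊤ : SimpleGraph (Fin n)).edgeFinset, (p * f e + (1 - p) * g e) := by
        simp_rw [← sum_gnpWeight_mul_prod, prod_f, prod_g, mul_ite, mul_one, mul_zero]
    _ ≤ ∏ e ∈ (⊤ : SimpleGraph (Fin n)).edgeFinset, ((if e ∈ T then p else 1) *
          if e ∈ S then Real.exp (p * (Real.exp s - 1)) else 1) := by
        have h1p : 0 ≤ 1 - p := sub_nonneg.2 hp.2
        refine prod_le_prod (fun e _ ↦ ?_) fun e _ ↦ ?_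
        · refine add_nonneg (mul_nonneg hp.1 ?_) (mul_nonneg h1p ?_)
          · simp only [hf]
            split_ifs <;> positivity
          · simp only [hg]
            split_ifs <;> norm_num
        · by_cases heS : e ∈ S
          · have heT : e ∉ T := disjoint_left.1 hST heS
            simp only [hf, hg, heS, heT, if_true, if_false]
            linarith [Real.add_one_le_exp (p * (Real.exp s - 1))]
          · by_cases heT : e ∈ T <;> simp [hf, hg, heS, heT]
    _ = p ^ #T * Real.exp (p * (Real.exp s - 1) * #S) := by
        rw [prod_mul_distrib, prod_ite_mem, prod_ite_mem, prod_const, prod_const,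
          inter_eq_right.2 hT, inter_eq_right.2 hS, ← Real.exp_nat_mul, mul_comm (#S : ℝ)]

/- Exponential Markov inequality for the number of edges in `S` on the event that all of `T` is
present. The factor `s` is kept on both sides of the event so that `s < 0` gives lower tails. -/
lemma gnpProb_subset_and_mul_le_mul_card_le (hp : p ∈ Set.Icc (0 : ℝ) 1)
    {S T : Finset (Sym2 (Fin n))} (hS : S ⊆ (⊤ : SimpleGraph (Fin n)).edgeFinset)
    (hT : T ⊆ (⊤ : SimpleGraph (Fin n)).edgeFinset) (hST : Disjoint S T) (s m : ℝ) :
    gnpProb n p (fun G ↦ T ⊆ G.edgeFinset ∧ s * m ≤ s * #(G.edgeFinset ∩ S)) ≤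
      p ^ #T * Real.exp (p * (Real.exp s - 1) * #S - s * m) := by
  refine (gnpProb_le_sum_gnpWeight_mul hp (F := fun G ↦
    (if T ⊆ G.edgeFinset then Real.exp (s * #(G.edgeFinset ∩ S)) else 0) * Real.exp (-(s * m)))
    (fun G ↦ ?_) ?_).trans ?_
  · split_ifs <;> positivity
  · rintro G ⟨hTG, hm⟩
    rw [if_pos hTG, ← Real.exp_add]
    exact Real.one_le_exp (by linarith)
  · simp_rw [← mul_assoc, ← sum_mul]
    rw [sub_eq_add_neg, Real.exp_add, ← mul_assoc]
    exact mul_le_mul_of_nonneg_right (sum_gnpWeight_mul_ite_exp_le hp hS hT hST s)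
      (Real.exp_pos _).le

lemma gnpProb_mul_le_mul_card_le (hp : p ∈ Set.Icc (0 : ℝ) 1)
    {S : Finset (Sym2 (Fin n))} (hS : S ⊆ (⊤ : SimpleGraph (Fin n)).edgeFinset) (s m : ℝ) :
    gnpProb n p (fun G ↦ s * m ≤ s * #(G.edgeFinset ∩ S)) ≤
      Real.exp (p * (Real.exp s - 1) * #S - s * m) := by
  simpa using gnpProb_subset_and_mul_le_mul_card_le hp hS (empty_subset _)
    (disjoint_empty_right S) s m

end Probability

section EdgeCounts

variable {V : Type*}

lemma eBetween_eq_sum [Fintype V] (G : SimpleGraph V) (U Z : Finset V) :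
    eBetween G U Z = ∑ u ∈ U, #{z ∈ Z | G.Adj u z} := by
  simp only [eBetween, card_filter, sum_product]

lemma eBetween_le_sum_degree [Fintype V] (G : SimpleGraph V) (U Z : Finset V) :
    eBetween G U Z ≤ ∑ u ∈ U, G.degree u := by
  rw [eBetween_eq_sum]
  exact sum_le_sum fun u _ ↦ card_le_card fun z hz ↦ by simpa using (mem_filter.1 hz).2

lemma injOn_cutPairs {U W : Finset V} (h : Disjoint U W) :
    Set.InjOn (fun q : V × V ↦ s(q.1, q.2)) (U ×ˢ W : Finset (V × V)) := by
  rintro ⟨a, b⟩ hab ⟨c, d⟩ hcd he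
  simp only [coe_product, Set.mem_prod, mem_coe] at hab hcd
  obtain ⟨rfl, rfl⟩ | ⟨rfl, rfl⟩ := Sym2.eq_iff.1 he
  · rfl
  · exact absurd hcd.2 (disjoint_left.1 h hab.1)

variable [DecidableEq V]

/-- The pairs of distinct vertices of `U`: the edges counted by `eIn G U` are those lying here. -/
noncomputable def innerPairs (U : Finset V) : Finset (Sym2 V) :=
  U.offDiag.image fun q ↦ s(q.1, q.2)

/-- The pairs with one vertex in `U` and the other in `W`: for disjoint `U` and `W`, the edges
counted by `eBetween G U W` are those lying here. -/
noncomputable def cutPairs (U W : Finset V) : Finset (Sym2 V) :=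
  (U ×ˢ W).image fun q ↦ s(q.1, q.2)

@[simp]
lemma mk_mem_innerPairs {U : Finset V} {a b : V} :
    s(a, b) ∈ innerPairs U ↔ a ∈ U ∧ b ∈ U ∧ a ≠ b := by
  simp only [innerPairs, mem_image, mem_offDiag, Prod.exists, Sym2.eq_iff]
  grind

lemma card_innerPairs (U : Finset V) : #(innerPairs U) = (#U).choose 2 :=
  Sym2.card_image_offDiag U

lemma two_mul_card_innerPairs_le (U : Finset V) :
    2 * (#(innerPairs U) : ℝ) ≤ (#U : ℝ) ^ 2 := by
  rw [card_innerPairs, Nat.cast_choose_two]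
  linarith [Nat.cast_nonneg (α := ℝ) #U, sq (#U : ℝ)]

lemma card_cutPairs {U W : Finset V} (h : Disjoint U W) : #(cutPairs U W) = #U * #W := by
  rw [cutPairs, card_image_of_injOn (injOn_cutPairs h), card_product]

variable [Fintype V]

lemma innerPairs_subset (U : Finset V) : innerPairs U ⊆ (⊤ : SimpleGraph V).edgeFinset := by
  intro e
  induction e with | _ a b => simp +contextual

lemma cutPairs_subset {U W : Finset V} (h : Disjoint U W) :
    cutPairs U W ⊆ (⊤ : SimpleGraph V).edgeFinset := by
  intro e he
  obtain ⟨⟨a, b⟩, hab, rfl⟩ := mem_image.1 he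
  have ⟨ha, hb⟩ := mem_product.1 hab
  simpa using fun hab' : a = b ↦ disjoint_left.1 h ha (hab' ▸ hb)

lemma eIn_eq_card_inter (G : SimpleGraph V) (U : Finset V) :
    eIn G U = #(G.edgeFinset ∩ innerPairs U) := by
  rw [eIn]
  congr 1
  ext e
  induction e with | _ a b =>
    simp only [mem_filter, mem_inter, mem_edgeFinset, mem_edgeSet, Sym2.mem_iff,
      forall_eq_or_imp, forall_eq, mk_mem_innerPairs]
    exact and_congr_right fun h ↦ by simp [h.ne]

lemma eBetween_eq_card_inter (G : SimpleGraph V) {U W : Finset V} (h : Disjoint U W) :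
    eBetween G U W = #(G.edgeFinset ∩ cutPairs U W) := by
  have image_eq : G.edgeFinset ∩ cutPairs U W =
      ((U ×ˢ W).filter fun q ↦ G.Adj q.1 q.2).image fun q ↦ s(q.1, q.2) := by
    ext e
    simp only [cutPairs, mem_inter, mem_image, mem_filter]
    constructor
    · rintro ⟨he, q, hq, rfl⟩
      exact ⟨q, ⟨hq, by simpa using he⟩, rfl⟩
    · rintro ⟨q, ⟨hq, hadj⟩, rfl⟩
      exact ⟨by simpa using hadj, q, hq, rfl⟩
  rw [image_eq, card_image_of_injOn ((injOn_cutPairs h).mono (coe_subset.2 (filter_subset _ _))),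
    eBetween]

end EdgeCounts

section Tails

variable {n : ℕ} {p : ℝ}

-- Chernoff's inequality with `exp s = 2 * k / (#U * p)`.
lemma gnpProb_mul_card_lt_eIn_le (hp₀ : 0 < p) (hp₁ : p ≤ 1) {U : Finset (Fin n)}
    (hU : U.Nonempty) {k : ℝ} (hk : 0 < k) :
    gnpProb n p (fun G ↦ k * #U < eIn G U) ≤ (Real.exp 1 * #U * p / (2 * k)) ^ (k * #U) := by
  have hp : p ∈ Set.Icc (0 : ℝ) 1 := ⟨hp₀.le, hp₁⟩
  have : (0 : ℝ) < #U := by exact_mod_cast hU.card_pos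
  set y := #U * p / (2 * k) with hy
  have hy₀ : 0 < y := by positivity
  have base_eq : Real.exp 1 * #U * p / (2 * k) = Real.exp 1 * y := by rw [hy]; ring
  rw [base_eq]
  rcases le_or_gt 1 y with hy₁ | hy₁
  · refine (gnpProb_le_one hp _).trans (Real.one_le_rpow ?_ (by positivity))
    nlinarith [Real.add_one_le_exp 1]
  · set s := -Real.log y with hs
    have hs₀ : 0 ≤ s := neg_nonneg.2 (Real.log_nonpos hy₀.le hy₁.le)
    have exp_s : p * #U * Real.exp s = 2 * k := by
      rw [hs, Real.exp_neg, Real.exp_log hy₀, hy]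
      field_simp
    calc gnpProb n p (fun G ↦ k * #U < eIn G U)
        ≤ gnpProb n p (fun G ↦ s * (k * #U) ≤ s * #(G.edgeFinset ∩ innerPairs U)) :=
          gnpProb_mono hp fun G hG ↦ by
            rw [← eIn_eq_card_inter]
            exact mul_le_mul_of_nonneg_left hG.le hs₀
      _ ≤ Real.exp (p * (Real.exp s - 1) * #(innerPairs U) - s * (k * #U)) :=
          gnpProb_mul_le_mul_card_le hp (innerPairs_subset U) s _
      _ ≤ Real.exp (k * #U - s * (k * #U)) := by
          refine Real.exp_le_exp.2 (sub_le_sub_right ?_ _)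
          have exp_sub_nonneg : 0 ≤ p * (Real.exp s - 1) :=
            mul_nonneg hp.1 (sub_nonneg.2 (Real.one_le_exp hs₀))
          nlinarith [mul_le_mul_of_nonneg_left (two_mul_card_innerPairs_le U) exp_sub_nonneg,
            mul_nonneg hp.1 (sq_nonneg (#U : ℝ))]
      _ = (Real.exp 1 * y) ^ (k * #U) := by
          rw [Real.rpow_def_of_pos (by positivity), Real.log_mul (Real.exp_ne_zero 1) hy₀.ne',
            Real.log_exp, hs]
          ring_nf

/- For `s > 0` this bounds the upper tail and for `s < 0` the lower tail, in both cases at relative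
distance `2 * |s|` from the mean. -/
lemma gnpProb_mul_le_mul_eBetween_le (hp : p ∈ Set.Icc (0 : ℝ) 1) {U W : Finset (Fin n)}
    (hUW : Disjoint U W) {s : ℝ} (hs : |s| ≤ 1) :
    gnpProb n p (fun G ↦ s * ((1 + 2 * s) * (#U * #W * p)) ≤ s * eBetween G U W) ≤
      Real.exp (-(s ^ 2 * (#U * #W * p))) := by
  simp only [eBetween_eq_card_inter _ hUW]
  refine (gnpProb_mul_le_mul_card_le hp (cutPairs_subset hUW) s _).trans (Real.exp_le_exp.2 ?_)
  rw [card_cutPairs hUW, Nat.cast_mul]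
  have mean_nonneg : 0 ≤ #U * #W * p := mul_nonneg (by positivity) hp.1
  have exp_sub_le : Real.exp s - 1 ≤ s + s ^ 2 := by
    linarith [(abs_le.1 (Real.abs_exp_sub_one_sub_id_le hs)).2]
  linarith [mul_le_mul_of_nonneg_left exp_sub_le mean_nonneg]

lemma gnpProb_lt_abs_eBetween_sub_le (hp : p ∈ Set.Icc (0 : ℝ) 1) {U W : Finset (Fin n)}
    (hUW : Disjoint U W) {δ : ℝ} (hδ₀ : 0 < δ) (hδ₂ : δ ≤ 2) :
    gnpProb n p (fun G ↦ δ * (#U * #W * p) < |(eBetween G U W : ℝ) - #U * #W * p|) ≤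
      2 * Real.exp (-(δ ^ 2 / 4 * (#U * #W * p))) := by
  have upper := gnpProb_mul_le_mul_eBetween_le hp hUW (s := δ / 2)
    (abs_le.2 ⟨by linarith, by linarith⟩)
  have lower := gnpProb_mul_le_mul_eBetween_le hp hUW (s := -(δ / 2))
    (abs_le.2 ⟨by linarith, by linarith⟩)
  calc gnpProb n p (fun G ↦ δ * (#U * #W * p) < |(eBetween G U W : ℝ) - #U * #W * p|)
      ≤ gnpProb n p (fun G ↦
          δ / 2 * ((1 + 2 * (δ / 2)) * (#U * #W * p)) ≤ δ / 2 * eBetween G U W ∨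
          -(δ / 2) * ((1 + 2 * -(δ / 2)) * (#U * #W * p)) ≤ -(δ / 2) * eBetween G U W) := by
        refine gnpProb_mono hp fun G hG ↦ (lt_abs.1 hG).imp (fun h ↦ ?_) fun h ↦ ?_ <;> nlinarith
    _ ≤ _ := (gnpProb_or_le hp _ _).trans (add_le_add upper lower)
    _ = 2 * Real.exp (-(δ ^ 2 / 4 * (#U * #W * p))) := by
        rw [neg_sq, div_pow]
        norm_num
        ring

end Tails

section WithHighProbability

variable {p : ℕ → ℝ} {A B : ∀ n : ℕ, SimpleGraph (Fin n) → Prop}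

lemma whp_of_gnpProb_not_le (hp : ∀ n, p n ∈ Set.Icc (0 : ℝ) 1) {f : ℕ → ℝ}
    (hA : ∀ᶠ n in atTop, gnpProb n (p n) (fun G ↦ ¬ A n G) ≤ f n)
    (hf : Tendsto f atTop (nhds 0)) : WHP p A := by
  refine tendsto_of_tendsto_of_tendsto_of_le_of_le' (g := fun n ↦ 1 - f n) (h := fun _ ↦ 1)
    (by simpa using hf.const_sub 1) tendsto_const_nhds ?_
    (Eventually.of_forall fun n ↦ gnpProb_le_one (hp n) _)
  filter_upwards [hA] with n hn
  linarith [gnpProb_add_gnpProb_not (p := p n) (A n)]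

lemma WHP.tendsto_gnpProb_not (hA : WHP p A) :
    Tendsto (fun n ↦ gnpProb n (p n) fun G ↦ ¬ A n G) atTop (nhds 0) := by
  have gnpProb_not (n : ℕ) :
      gnpProb n (p n) (fun G ↦ ¬ A n G) = 1 - gnpProb n (p n) (A n) := by
    linarith [gnpProb_add_gnpProb_not (p := p n) (A n)]
  simp only [gnpProb_not]
  simpa using Tendsto.const_sub 1 hA

lemma WHP.and (hp : ∀ n, p n ∈ Set.Icc (0 : ℝ) 1) (hA : WHP p A) (hB : WHP p B) :
    WHP p fun n G ↦ A n G ∧ B n G := by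
  refine whp_of_gnpProb_not_le hp (Eventually.of_forall fun n ↦ ?_)
    (by simpa using hA.tendsto_gnpProb_not.add hB.tendsto_gnpProb_not)
  simpa only [not_and_or] using gnpProb_or_le (hp n) (fun G ↦ ¬ A n G) fun G ↦ ¬ B n G

lemma WHP.mono (hp : ∀ n, p n ∈ Set.Icc (0 : ℝ) 1) (hA : WHP p A)
    (h : ∀ᶠ n in atTop, ∀ G, A n G → B n G) : WHP p B := by
  refine whp_of_gnpProb_not_le hp ?_ hA.tendsto_gnpProb_not
  filter_upwards [h] with n hn
  exact gnpProb_mono (hp n) fun G hB hA ↦ hB (hn G hA)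

end WithHighProbability

section DegreeRange

variable {p : ℕ → ℝ}

lemma eventually_log_le_mul (hp : ∀ n : ℕ, Real.log n / n ≤ p n) :
    ∀ᶠ n : ℕ in atTop, Real.log n ≤ n * p n := by
  filter_upwards [eventually_gt_atTop 0] with n hn
  exact (div_le_iff₀' (Nat.cast_pos.2 hn)).1 (hp n)

lemma tendsto_log_natCast : Tendsto (fun n : ℕ ↦ Real.log n) atTop atTop :=
  Real.tendsto_log_atTop.comp tendsto_natCast_atTop_atTop

end DegreeRange

section LowDegree

/-- No vertex of `G` has two neighbours of degree less than `t`. -/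
def LowDegScattered {n : ℕ} (t : ℝ) (G : SimpleGraph (Fin n)) : Prop :=
  ∀ v, #(G.neighborFinset v ∩ lowDegSet n t G) ≤ 1

variable {n : ℕ} {p : ℝ}

/- The two degrees are bounded from below by the edges from `{u, w}` to the vertices other than
`v, u, w`, which are independent of the two edges at `v`. -/
lemma gnpProb_adj_and_degree_lt_le (hp : p ∈ Set.Icc (0 : ℝ) 1) {v u w : Fin n} (hvu : v ≠ u)
    (hvw : v ≠ w) (huw : u ≠ w) (t : ℝ) :
    gnpProb n p (fun G ↦ (G.Adj v u ∧ G.Adj v w) ∧ G.degree u < t ∧ G.degree w < t) ≤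
      p ^ 2 * Real.exp (2 * t - 2 * (1 - Real.exp (-1)) * ((n - 3) * p)) := by
  set X : Finset (Fin n) := {v, u, w}ᶜ with hX
  set T : Finset (Sym2 (Fin n)) := {s(v, u), s(v, w)} with hT
  have disjoint_X : Disjoint {u, w} X :=
    disjoint_compl_right.mono_left (subset_insert v {u, w})
  have card_X : (#X : ℝ) = n - 3 := by
    have card_eq : #{v, u, w} = 3 := card_eq_three.2 ⟨v, u, w, hvu, hvw, huw, rfl⟩
    rw [hX, card_compl, card_eq, Fintype.card_fin, Nat.cast_sub, Nat.cast_ofNat]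
    simpa [card_eq] using card_le_univ {v, u, w}
  have card_T : #T = 2 := card_pair fun h ↦ huw (Sym2.congr_right.1 h)
  have T_subset : T ⊆ (⊤ : SimpleGraph (Fin n)).edgeFinset := by
    simp [hT, insert_subset_iff, hvu, hvw]
  have disjoint_T : Disjoint (cutPairs {u, w} X) T := by
    simp only [Finset.disjoint_left, cutPairs, hX, hT, mem_image, Prod.exists, mem_product,
      mem_compl, mem_insert, mem_singleton]
    grind
  calc gnpProb n p (fun G ↦ (G.Adj v u ∧ G.Adj v w) ∧ G.degree u < t ∧ G.degree w < t)
      ≤ gnpProb n p (fun G ↦ T ⊆ G.edgeFinset ∧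
          -1 * (2 * t) ≤ -1 * #(G.edgeFinset ∩ cutPairs {u, w} X)) := by
        refine gnpProb_mono hp fun G hG ↦ ⟨by simpa [hT, insert_subset_iff] using hG.1, ?_⟩
        have eBetween_le : (eBetween G {u, w} X : ℝ) ≤ G.degree u + G.degree w := by
          exact_mod_cast (eBetween_le_sum_degree G _ X).trans_eq (sum_pair huw)
        rw [← eBetween_eq_card_inter G disjoint_X]
        linarith [hG.2.1, hG.2.2]
    _ ≤ p ^ #T * Real.exp (p * (Real.exp (-1) - 1) * #(cutPairs {u, w} X) - -1 * (2 * t)) :=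
        gnpProb_subset_and_mul_le_mul_card_le hp (cutPairs_subset disjoint_X) T_subset
          disjoint_T _ _
    _ = p ^ 2 * Real.exp (2 * t - 2 * (1 - Real.exp (-1)) * ((n - 3) * p)) := by
        rw [card_T, card_cutPairs disjoint_X, card_pair huw, Nat.cast_mul, card_X]
        push_cast
        ring_nf

lemma gnpProb_not_lowDegScattered_le (hp : p ∈ Set.Icc (0 : ℝ) 1) (t : ℝ) :
    gnpProb n p (fun G ↦ ¬ LowDegScattered t G) ≤
      n ^ 3 * (p ^ 2 * Real.exp (2 * t - 2 * (1 - Real.exp (-1)) * ((n - 3) * p))) := by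
  calc gnpProb n p (fun G ↦ ¬ LowDegScattered t G)
      ≤ gnpProb n p (fun G ↦ ∃ x : Fin n × Fin n × Fin n,
          (x.1 ≠ x.2.1 ∧ x.1 ≠ x.2.2 ∧ x.2.1 ≠ x.2.2) ∧
          (G.Adj x.1 x.2.1 ∧ G.Adj x.1 x.2.2) ∧ G.degree x.2.1 < t ∧ G.degree x.2.2 < t) := by
        refine gnpProb_mono hp fun G hG ↦ ?_
        simp only [LowDegScattered, not_forall, not_le, one_lt_card] at hG
        obtain ⟨v, u, hu, w, hw, huw⟩ := hG
        simp only [mem_inter, mem_neighborFinset, lowDegSet, mem_filter, mem_univ, true_and]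
          at hu hw
        exact ⟨(v, u, w), ⟨hu.1.ne, hw.1.ne, huw⟩, ⟨hu.1, hw.1⟩, hu.2, hw.2⟩
    _ ≤ Fintype.card (Fin n × Fin n × Fin n) *
          (p ^ 2 * Real.exp (2 * t - 2 * (1 - Real.exp (-1)) * ((n - 3) * p))) :=
        gnpProb_exists_le_card_mul hp fun x ↦ gnpProb_const_and_le (by positivity)
          fun ⟨hvu, hvw, huw⟩ ↦ gnpProb_adj_and_degree_lt_le hp hvu hvw huw t
    _ = _ := by
        simp only [Fintype.card_prod, Fintype.card_fin]
        push_cast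
        ring

lemma mul_sq_mul_exp_le {n d : ℝ} (hn : 0 < n) (hd : Real.log n ≤ d) (hd₀ : 0 ≤ d) :
    n * d ^ 2 * Real.exp (4 - 1.24 * d) ≤
      200 * Real.exp 4 * Real.exp (-(0.14 * Real.log n)) := by
  have sq_le : d ^ 2 ≤ 200 * Real.exp (0.1 * d) := by
    have := Real.pow_div_factorial_le_exp (x := 0.1 * d) (by positivity) 2
    norm_num at this ⊢
    linarith
  calc n * d ^ 2 * Real.exp (4 - 1.24 * d)
      ≤ n * (200 * Real.exp (0.1 * d)) * Real.exp (4 - 1.24 * d) := by gcongr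
    _ = 200 * Real.exp (Real.log n + 4 - 1.14 * d) := by
        have exponent_eq : Real.log n + 4 - 1.14 * d =
            Real.log n + 0.1 * d + (4 - 1.24 * d) := by ring
        rw [exponent_eq, Real.exp_add, Real.exp_add, Real.exp_log hn]
        ring
    _ ≤ 200 * Real.exp (4 + -(0.14 * Real.log n)) := by
        gcongr
        linarith
    _ = 200 * Real.exp 4 * Real.exp (-(0.14 * Real.log n)) := by rw [Real.exp_add, mul_assoc]

/- The threshold costs a factor `exp (0.02 * d)` for `d = n * p`, while the probability that a pair
of vertices has no edges at all is about `exp (-2 * d)`; the choice `s = -1` in Chernoff's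
inequality retains `exp (-1.24 * d)`, which beats the number `n ^ 3 * p ^ 2` of paths. -/
lemma whp_lowDegScattered {p : ℕ → ℝ} (hp : ∀ n, p n ∈ Set.Icc (0 : ℝ) 1)
    (hlog : ∀ᶠ n : ℕ in atTop, Real.log n ≤ n * p n) :
    WHP p fun n G ↦ LowDegScattered (n * p n / 100) G := by
  refine whp_of_gnpProb_not_le hp
    (f := fun n ↦ 200 * Real.exp 4 * Real.exp (-(0.14 * Real.log n))) ?_ ?_
  · filter_upwards [hlog, eventually_ge_atTop 3] with n hn hn₃
    have natCast_ge : (3 : ℝ) ≤ n := by exact_mod_cast hn₃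
    have exponent_le : 2 * (n * p n / 100) - 2 * (1 - Real.exp (-1)) * ((n - 3) * p n) ≤
        4 - 1.24 * (n * p n) := by
      have mean_nonneg : 0 ≤ (n - 3) * p n := mul_nonneg (by linarith) (hp n).1
      nlinarith [Real.exp_neg_one_lt_d9, (hp n).2]
    calc gnpProb n (p n) (fun G ↦ ¬ LowDegScattered (n * p n / 100) G)
        ≤ n ^ 3 * (p n ^ 2 * Real.exp (4 - 1.24 * (n * p n))) :=
          (gnpProb_not_lowDegScattered_le (hp n) _).trans (by gcongr)
      _ = n * (n * p n) ^ 2 * Real.exp (4 - 1.24 * (n * p n)) := by ring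
      _ ≤ _ := mul_sq_mul_exp_le (by linarith) hn (mul_nonneg (by linarith) (hp n).1)
  · have exponent_tendsto : Tendsto (fun n : ℕ ↦ -(0.14 * Real.log n)) atTop atBot :=
      tendsto_neg_atTop_atBot.comp (tendsto_log_natCast.const_mul_atTop (by norm_num))
    simpa using (Real.tendsto_exp_atBot.comp exponent_tendsto).const_mul (200 * Real.exp 4)

end LowDegree

section LocalSparsity

/-- Every set of fewer than `m` vertices spans at most `k` times as many edges as it has
vertices. -/
def LocallySparse {V : Type*} [Fintype V] (m k : ℝ) (G : SimpleGraph V) : Prop :=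
  ∀ U : Finset V, (#U : ℝ) < m → (eIn G U : ℝ) ≤ k * #U

lemma choose_mul_pow_le {r : ℝ} (hr : 0 ≤ r) {n : ℕ} (hn : 0 < n) (i : ℕ) :
    (n.choose i : ℝ) * (r * i / (Real.exp 1 * n)) ^ i ≤ r ^ i := by
  have pow_div_factorial_le : (i : ℝ) ^ i / i.factorial ≤ Real.exp 1 ^ i := by
    simpa using Real.pow_div_factorial_le_exp (x := i) (by positivity) i
  calc (n.choose i : ℝ) * (r * i / (Real.exp 1 * n)) ^ i
      ≤ (n : ℝ) ^ i / i.factorial * (r * i / (Real.exp 1 * n)) ^ i := by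
        gcongr
        exact Nat.choose_le_pow_div i n
    _ = r ^ i * ((i : ℝ) ^ i / i.factorial) / Real.exp 1 ^ i := by
        rw [div_pow, mul_pow, mul_pow]
        field_simp
    _ ≤ r ^ i * Real.exp 1 ^ i / Real.exp 1 ^ i := by gcongr
    _ = r ^ i := by field_simp

lemma sum_nonempty_pow_card_le {α : Type*} [Fintype α] {r : ℝ} (hr₀ : 0 ≤ r) (hr : r ≤ 1 / 2) :
    ∑ U : Finset α with U.Nonempty, (r * #U / (Real.exp 1 * Fintype.card α)) ^ #U ≤ 2 * r := by
  set n := Fintype.card α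
  set f : ℕ → ℝ := fun i ↦ (r * i / (Real.exp 1 * n)) ^ i with hf
  have sum_eq : 1 + ∑ U : Finset α with U.Nonempty, f #U =
      ∑ i ∈ range n, n.choose (i + 1) * f (i + 1) + 1 := by
    have filter_eq : (univ : Finset (Finset α)).filter Finset.Nonempty = univ.erase ∅ := by
      ext U
      simp [nonempty_iff_ne_empty]
    calc 1 + ∑ U : Finset α with U.Nonempty, f #U
        = ∑ U : Finset α, f #U := by
          rw [filter_eq, ← add_sum_erase univ (fun U ↦ f #U) (mem_univ ∅)]
          simp [hf]
      _ = ∑ i ∈ range (n + 1), n.choose i • f i := by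
          simpa using sum_powerset_apply_card f (x := (univ : Finset α))
      _ = _ := by
          rw [sum_range_succ']
          simp [hf]
  have term_le (i : ℕ) (hi : i ∈ range n) : n.choose (i + 1) * f (i + 1) ≤ r * (1 / 2) ^ i :=
    calc n.choose (i + 1) * f (i + 1) ≤ r ^ (i + 1) :=
          choose_mul_pow_le hr₀ (Nat.zero_lt_of_lt (mem_range.1 hi)) (i + 1)
      _ = r * r ^ i := pow_succ' r i
      _ ≤ r * (1 / 2) ^ i := by gcongr
  calc ∑ U : Finset α with U.Nonempty, f #U
      = ∑ i ∈ range n, n.choose (i + 1) * f (i + 1) := by linarith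
    _ ≤ ∑ i ∈ range n, r * (1 / 2) ^ i := sum_le_sum term_le
    _ = r * ∑ i ∈ range n, (1 / 2 : ℝ) ^ i := by rw [mul_sum]
    _ ≤ r * 2 := by
        gcongr
        exact sum_geometric_two_le n
    _ = 2 * r := mul_comm _ _

lemma gnpProb_exists_nonempty_le {n : ℕ} {p r : ℝ} (hp : p ∈ Set.Icc (0 : ℝ) 1) (hr₀ : 0 ≤ r)
    (hr : r ≤ 1 / 2) {A : Finset (Fin n) → SimpleGraph (Fin n) → Prop}
    (hA : ∀ U : Finset (Fin n), U.Nonempty →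
      gnpProb n p (A U) ≤ (r * #U / (Real.exp 1 * n)) ^ #U) :
    gnpProb n p (fun G ↦ ∃ U : Finset (Fin n), U.Nonempty ∧ A U G) ≤ 2 * r :=
  calc gnpProb n p (fun G ↦ ∃ U : Finset (Fin n), U.Nonempty ∧ A U G)
      = gnpProb n p (fun G ↦ ∃ U : {U : Finset (Fin n) // U.Nonempty}, A U G) := by
        simp only [Subtype.exists, exists_prop]
    _ ≤ ∑ U : {U : Finset (Fin n) // U.Nonempty}, gnpProb n p (A U) := gnpProb_exists_le_sum hp _
    _ = ∑ U : Finset (Fin n) with U.Nonempty, gnpProb n p (A U) :=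
        (sum_subtype _ (by simp) fun U ↦ gnpProb n p (A U)).symm
    _ ≤ ∑ U : Finset (Fin n) with U.Nonempty, (r * #U / (Real.exp 1 * n)) ^ #U :=
        sum_le_sum fun U hU ↦ hA U (mem_filter.1 hU).2
    _ ≤ 2 * r := by simpa using sum_nonempty_pow_card_le (α := Fin n) hr₀ hr

-- `h` makes the probability that `U` is too dense small enough for a union bound over all `U`.
lemma gnpProb_not_locallySparse_le {n : ℕ} {p m k r : ℝ} (hp₀ : 0 < p) (hp₁ : p ≤ 1) (hk : 0 < k)
    (hr₀ : 0 ≤ r) (hr : r ≤ 1 / 2)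
    (h : ∀ u : ℕ, 0 < u → (u : ℝ) < m →
      (Real.exp 1 * u * p / (2 * k)) ^ k ≤ r * u / (Real.exp 1 * n)) :
    gnpProb n p (fun G ↦ ¬ LocallySparse m k G) ≤ 2 * r := by
  have hp : p ∈ Set.Icc (0 : ℝ) 1 := ⟨hp₀.le, hp₁⟩
  calc gnpProb n p (fun G ↦ ¬ LocallySparse m k G)
      ≤ gnpProb n p (fun G ↦ ∃ U : Finset (Fin n), U.Nonempty ∧ #U < m ∧ k * #U < eIn G U) := by
        refine gnpProb_mono hp fun G hG ↦ ?_
        simp only [LocallySparse, not_forall, not_le, exists_prop] at hG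
        obtain ⟨U, hUm, hUk⟩ := hG
        refine ⟨U, nonempty_iff_ne_empty.2 ?_, hUm, hUk⟩
        rintro rfl
        simp [eIn_eq_card_inter, innerPairs] at hUk
    _ ≤ 2 * r := by
        refine gnpProb_exists_nonempty_le hp hr₀ hr fun U hU ↦
          gnpProb_const_and_le (by positivity) fun hUm ↦ ?_
        refine (gnpProb_mul_card_lt_eIn_le hp₀ hp₁ hU hk).trans ?_
        rw [Real.rpow_mul (by positivity), Real.rpow_natCast]
        gcongr
        exact h #U hU.card_pos hUm

variable {p : ℕ → ℝ}

lemma sparse_base_le_rpow_neg {a b η n p u : ℝ} (hn : 0 < n) (hp₀ : 0 < p) (hp₁ : p ≤ 1)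
    (hη : a + 2 * η = b) (hb : b ≤ 1) (hlog : Real.exp 1 / 2 * Real.log n ≤ n ^ η)
    (hu : u ≤ n ^ a * Real.log n) :
    Real.exp 1 * u * p / (2 * (n * p) ^ b) ≤ n ^ (-η) :=
  calc Real.exp 1 * u * p / (2 * (n * p) ^ b)
      = Real.exp 1 / 2 * u * p ^ (1 - b) / n ^ b := by
        rw [Real.mul_rpow hn.le hp₀.le, Real.rpow_sub hp₀, Real.rpow_one]
        field_simp
    _ ≤ Real.exp 1 / 2 * (n ^ a * Real.log n) * p ^ (1 - b) / n ^ b := by gcongr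
    _ = Real.exp 1 / 2 * Real.log n * n ^ a * p ^ (1 - b) / n ^ b := by ring
    _ ≤ n ^ η * n ^ a * 1 / n ^ b := by
        gcongr
        exact Real.rpow_le_one hp₀.le hp₁ (by linarith)
    _ = n ^ (-η) := by
        rw [mul_one, ← Real.rpow_add hn, ← Real.rpow_sub hn]
        congr 1
        linarith

/- Every set below the size bound has average density at most `n ^ (-η)` times `k`, where
`η = (b - a) / 2`, and `k` tends to infinity. -/
lemma whp_locallySparse_rpow_mul_log (hp : ∀ n, p n ∈ Set.Icc (0 : ℝ) 1)
    (hd : Tendsto (fun n : ℕ ↦ n * p n) atTop atTop) {a b : ℝ} (hab : a < b) (hb₀ : 0 < b)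
    (hb₁ : b ≤ 1) :
    WHP p fun n G ↦ LocallySparse ((n : ℝ) ^ a * Real.log n) ((n * p n) ^ b) G := by
  obtain ⟨η, hη₀, hη⟩ : ∃ η : ℝ, 0 < η ∧ a + 2 * η = b := ⟨(b - a) / 2, by linarith, by ring⟩
  have log_le : ∀ᶠ x : ℝ in atTop, Real.exp 1 / 2 * Real.log x ≤ x ^ η := by
    filter_upwards [((isLittleO_log_rpow_atTop hη₀).const_mul_left (Real.exp 1 / 2)).bound one_pos,
      eventually_ge_atTop 0] with x hx hx₀
    rw [one_mul, Real.norm_of_nonneg (Real.rpow_nonneg hx₀ η)] at hx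
    exact (Real.le_norm_self _).trans hx
  refine whp_of_gnpProb_not_le hp (f := fun n ↦ 2 * (1 / n)) ?_
    (by simpa using tendsto_inv_atTop_nhds_zero_nat.const_mul (2 : ℝ))
  filter_upwards [tendsto_natCast_atTop_atTop.eventually log_le,
    ((tendsto_rpow_atTop hb₀).comp hd).eventually_ge_atTop (3 / η), hd.eventually_gt_atTop 0,
    eventually_ge_atTop 3] with n hlog hk hd₀ hn
  have hn₃ : (3 : ℝ) ≤ n := by exact_mod_cast hn
  have hp₀ : 0 < p n := pos_of_mul_pos_right hd₀ n.cast_nonneg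
  refine gnpProb_not_locallySparse_le hp₀ (hp n).2 (by positivity) (by positivity)
    (one_div_le_one_div_of_le two_pos (by linarith)) fun u hu hum ↦ ?_
  have hu₁ : (1 : ℝ) ≤ u := by exact_mod_cast hu
  calc (Real.exp 1 * u * p n / (2 * (n * p n) ^ b)) ^ ((n * p n) ^ b)
      ≤ ((n : ℝ) ^ (-η)) ^ ((n * p n) ^ b) := by
        gcongr
        exact sparse_base_le_rpow_neg (by linarith) hp₀ (hp n).2 hη hb₁ hlog hum.le
    _ = (n : ℝ) ^ (-(η * (n * p n) ^ b)) := by rw [← Real.rpow_mul (by linarith), neg_mul]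
    _ ≤ (n : ℝ) ^ (-3 : ℝ) := by
        gcongr
        · linarith
        · exact (div_le_iff₀' hη₀).1 hk
    _ = 1 / n * 1 / (n * n) := by
        rw [Real.rpow_neg (by linarith), Real.rpow_ofNat]
        field_simp
    _ ≤ 1 / n * u / (Real.exp 1 * n) := by
        gcongr
        linarith [Real.exp_one_lt_three]

lemma rpow_le_mul_rpow_sub_one {x y k : ℝ} (hx : 0 ≤ x) (hxy : x ≤ y) (hk : 1 ≤ k) :
    x ^ k ≤ x * y ^ (k - 1) :=
  calc x ^ k = x * x ^ (k - 1) := by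
        rw [← Real.rpow_one_add' hx (by linarith), add_sub_cancel]
    _ ≤ x * y ^ (k - 1) := by gcongr

lemma whp_locallySparse_mul (hp : ∀ n, p n ∈ Set.Icc (0 : ℝ) 1)
    (hd : Tendsto (fun n : ℕ ↦ n * p n) atTop atTop) {c K : ℝ} (hc : 0 < c)
    (hcK : Real.exp 1 * c < 2 * K) :
    WHP p fun n G ↦ LocallySparse (c * n) (K * (n * p n)) G := by
  have hK : 0 < K := by linarith [mul_pos (Real.exp_pos 1) hc]
  set ρ := Real.exp 1 * c / (2 * K)
  have hρ₀ : 0 < ρ := by positivity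
  have hρ₁ : ρ < 1 := (div_lt_one (by positivity)).2 hcK
  have exponent_tendsto : Tendsto (fun n : ℕ ↦ K * (n * p n) - 1) atTop atTop :=
    tendsto_atTop_add_const_right _ (-1) (hd.const_mul_atTop hK)
  have hr : Tendsto (fun n : ℕ ↦ Real.exp 1 ^ 2 / (2 * K) * ρ ^ (K * (n * p n) - 1)) atTop
      (nhds 0) := by
    simpa only [mul_zero, Function.comp_def] using ((tendsto_rpow_atTop_of_base_lt_one ρ
      (neg_one_lt_zero.trans hρ₀) hρ₁).comp exponent_tendsto).const_mul (Real.exp 1 ^ 2 / (2 * K))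
  refine whp_of_gnpProb_not_le hp ?_ (by simpa only [mul_zero] using hr.const_mul 2)
  filter_upwards [hr.eventually_le_const (by norm_num : (0 : ℝ) < 1 / 2),
    (hd.const_mul_atTop hK).eventually_ge_atTop 1, hd.eventually_gt_atTop 0] with n hr₂ hk hd₀
  have hp₀ : 0 < p n := pos_of_mul_pos_right hd₀ n.cast_nonneg
  have hn₀ : (0 : ℝ) < n := pos_of_mul_pos_left hd₀ hp₀.le
  refine gnpProb_not_locallySparse_le hp₀ (hp n).2 (by positivity) (by positivity) hr₂
    fun u _ hum ↦ ?_
  set x := Real.exp 1 * u / (2 * K * n) with hx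
  have x_le : x ≤ ρ := by
    calc Real.exp 1 * u / (2 * K * n) ≤ Real.exp 1 * (c * n) / (2 * K * n) := by gcongr
      _ = ρ := by rw [← mul_assoc, mul_div_mul_right _ _ hn₀.ne']
  calc (Real.exp 1 * u * p n / (2 * (K * (n * p n)))) ^ (K * (n * p n))
      = x ^ (K * (n * p n)) := by
        rw [hx]
        field_simp
    _ ≤ x * ρ ^ (K * (n * p n) - 1) := rpow_le_mul_rpow_sub_one (by positivity) x_le hk
    _ = Real.exp 1 ^ 2 / (2 * K) * ρ ^ (K * (n * p n) - 1) * u / (Real.exp 1 * n) := by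
        rw [hx]
        field_simp

end LocalSparsity

section CutConcentration

/-- Between disjoint sets of at least `a` and `b` vertices the number of edges is within a factor
`1 ± δ` of its mean in `G(n,p)`. -/
def CutConcentrated {V : Type*} [Fintype V] (p δ a b : ℝ) (G : SimpleGraph V) : Prop :=
  ∀ U W : Finset V, Disjoint U W → a ≤ #U → b ≤ #W →
    |(eBetween G U W : ℝ) - #U * #W * p| ≤ δ * (#U * #W * p)

lemma gnpProb_not_cutConcentrated_le {n : ℕ} {p δ a b : ℝ} (hp : p ∈ Set.Icc (0 : ℝ) 1)
    (hδ₀ : 0 < δ) (hδ₂ : δ ≤ 2) (hb : 0 ≤ b) :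
    gnpProb n p (fun G ↦ ¬ CutConcentrated p δ a b G) ≤
      4 ^ n * (2 * Real.exp (-(δ ^ 2 / 4 * (a * b * p)))) := by
  have hp₀ : 0 ≤ p := hp.1
  calc gnpProb n p (fun G ↦ ¬ CutConcentrated p δ a b G)
      ≤ gnpProb n p (fun G ↦ ∃ x : Finset (Fin n) × Finset (Fin n),
          (Disjoint x.1 x.2 ∧ a ≤ #x.1 ∧ b ≤ #x.2) ∧
            δ * (#x.1 * #x.2 * p) < |(eBetween G x.1 x.2 : ℝ) - #x.1 * #x.2 * p|) := by
        refine gnpProb_mono hp fun G hG ↦ ?_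
        simp only [CutConcentrated, not_forall, not_le, exists_prop] at hG
        obtain ⟨U, W, hUW, hU, hW, hlt⟩ := hG
        exact ⟨(U, W), ⟨hUW, hU, hW⟩, hlt⟩
    _ ≤ Fintype.card (Finset (Fin n) × Finset (Fin n)) *
          (2 * Real.exp (-(δ ^ 2 / 4 * (a * b * p)))) := by
        refine gnpProb_exists_le_card_mul hp fun x ↦ gnpProb_const_and_le (by positivity) ?_
        rintro ⟨hdisj, hU, hW⟩
        refine (gnpProb_lt_abs_eBetween_sub_le hp hdisj hδ₀ hδ₂).trans ?_
        gcongr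
    _ = 4 ^ n * (2 * Real.exp (-(δ ^ 2 / 4 * (a * b * p)))) := by
        simp only [Fintype.card_prod, Fintype.card_finset, Fintype.card_fin, ← mul_pow]
        norm_num

lemma whp_cutConcentrated {p : ℕ → ℝ} (hp : ∀ n, p n ∈ Set.Icc (0 : ℝ) 1)
    (hd : Tendsto (fun n : ℕ ↦ n * p n) atTop atTop) {δ a b : ℝ} (hδ₀ : 0 < δ) (hδ₂ : δ ≤ 2)
    (ha : 0 < a) (hb : 0 < b) :
    WHP p fun n G ↦ CutConcentrated (p n) δ (a * n) (b * n) G := by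
  have hC : 0 < δ ^ 2 / 4 * (a * b) := by positivity
  refine whp_of_gnpProb_not_le hp (f := fun n ↦ 2 * (1 / 2) ^ n) ?_ (by
    simpa using (tendsto_pow_atTop_nhds_zero_of_lt_one (r := (1 / 2 : ℝ)) (by norm_num)
      (by norm_num)).const_mul 2)
  filter_upwards [(hd.const_mul_atTop hC).eventually_ge_atTop (Real.log 8)] with n hn
  calc gnpProb n (p n) (fun G ↦ ¬ CutConcentrated (p n) δ (a * n) (b * n) G)
      ≤ 4 ^ n * (2 * Real.exp (-(δ ^ 2 / 4 * (a * n * (b * n) * p n)))) :=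
        gnpProb_not_cutConcentrated_le (hp n) hδ₀ hδ₂ (by positivity)
    _ ≤ 4 ^ n * (2 * Real.exp (n * -Real.log 8)) := by
        gcongr
        linarith [mul_le_mul_of_nonneg_left hn n.cast_nonneg]
    _ = 2 * (1 / 2) ^ n := by
        rw [Real.exp_nat_mul, Real.exp_neg, Real.exp_log (by norm_num), mul_left_comm, ← mul_pow]
        norm_num

end CutConcentration

section Subgraphs

variable {V W : Type*} [Fintype V] [Fintype W]

lemma eIn_le_eIn_map (f : W ↪ V) {G : SimpleGraph V} {K : SimpleGraph W} (hK : K ≤ G.comap f)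
    (U : Finset W) : eIn K U ≤ eIn G (U.map f) := by
  refine card_le_card_of_injOn (Sym2.map f) (fun e he ↦ ?_) (Sym2.map.injective f.injective).injOn
  induction e with | _ a b =>
  simp only [coe_filter, Set.mem_ofPred_eq, mem_edgeFinset, mem_edgeSet, Sym2.map_mk, Sym2.ball,
    Finset.mem_map'] at he ⊢
  exact ⟨hK he.1, he.2⟩

lemma eBetween_comap (f : W ↪ V) (G : SimpleGraph V) (U Z : Finset W) :
    eBetween (G.comap f) U Z = eBetween G (U.map f) (Z.map f) := by
  simp only [eBetween_eq_sum, sum_map, filter_map, card_map]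
  rfl

lemma eBetween_le_eBetween_sdiff_add (K H : SimpleGraph V) (U Z : Finset V) :
    eBetween K U Z ≤ eBetween (K \ H) U Z + eBetween H U Z := by
  refine (card_le_card fun q hq ↦ ?_).trans (card_union_le _ _)
  simp only [mem_union, mem_filter, sdiff_adj] at hq ⊢
  tauto

lemma degree_le_of_comap_le_sup [DecidableEq V] (f : W ↪ V) {G : SimpleGraph V}
    {K H : SimpleGraph W} (h : G.comap f ≤ K ⊔ H) {D : Finset V} (hD : ∀ x ∉ D, x ∈ Set.range f)
    (v : W) : G.degree (f v) ≤ K.degree v + H.degree v + #(G.neighborFinset (f v) ∩ D) := by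
  have neighborFinset_subset : G.neighborFinset (f v) ⊆
      (K.neighborFinset v ∪ H.neighborFinset v).map f ∪ G.neighborFinset (f v) ∩ D := by
    intro x hx
    by_cases hxD : x ∈ D
    · exact mem_union_right _ (mem_inter.2 ⟨hx, hxD⟩)
    · obtain ⟨w, rfl⟩ := hD x hxD
      refine mem_union_left _ (mem_map_of_mem f ?_)
      have adj : (G.comap f).Adj v w := (G.mem_neighborFinset ..).1 hx
      simpa using h adj
  simp only [← card_neighborFinset_eq_degree]
  refine (card_le_card neighborFinset_subset).trans ((card_union_le _ _).trans ?_)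
  rw [card_map]
  gcongr
  exact card_union_le _ _

lemma eBetween_self_le (G : SimpleGraph V) (U : Finset V) : eBetween G U U ≤ 2 * eIn G U := by
  set F := {q ∈ U ×ˢ U | G.Adj q.1 q.2} with hF
  have card_fiber_le (e : Sym2 V) : #{q ∈ F | s(q.1, q.2) = e} ≤ 2 := by
    induction e with | _ a b =>
    refine (card_le_card (t := {(a, b), (b, a)}) fun q hq ↦ ?_).trans card_le_two
    simpa [Prod.ext_iff] using (mem_filter.1 hq).2
  calc #F ≤ 2 * #(F.image fun q ↦ s(q.1, q.2)) :=
        card_le_mul_card_image _ 2 fun e _ ↦ card_fiber_le e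
    _ ≤ 2 * eIn G U := by
        refine Nat.mul_le_mul_left 2 (card_le_card fun e he ↦ ?_)
        obtain ⟨q, hq, rfl⟩ := mem_image.1 he
        simpa [hF, and_comm] using hq

lemma sum_degree_le [DecidableEq V] (G : SimpleGraph V) (U : Finset V) :
    ∑ u ∈ U, G.degree u ≤ 2 * eIn G U + eBetween G U Uᶜ := by
  have degree_eq (u : V) : G.degree u = #{z ∈ U | G.Adj u z} + #{z ∈ Uᶜ | G.Adj u z} := by
    rw [← card_union_of_disjoint (disjoint_filter_filter disjoint_compl_right), ← filter_union,
      union_compl, ← card_neighborFinset_eq_degree, neighborFinset_eq_filter]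
  calc ∑ u ∈ U, G.degree u = eBetween G U U + eBetween G U Uᶜ := by
        simp only [degree_eq, eBetween_eq_sum, sum_add_distrib]
    _ ≤ 2 * eIn G U + eBetween G U Uᶜ := by
        gcongr
        exact eBetween_self_le G U

lemma LocallySparse.of_le_comap {m m' k : ℝ} {G : SimpleGraph V} (hG : LocallySparse m k G)
    (f : W ↪ V) {K : SimpleGraph W} (hK : K ≤ G.comap f) (hm : m' ≤ m) :
    LocallySparse m' k K := fun U hU ↦ by
  have eIn_le : (eIn K U : ℝ) ≤ eIn G (U.map f) := by exact_mod_cast eIn_le_eIn_map f hK U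
  simpa using eIn_le.trans (hG (U.map f) (by simpa using hU.trans_le hm))

lemma eBetween_map_le [DecidableEq V] (f : W ↪ V) {G : SimpleGraph V} {H : SimpleGraph W} {c : ℝ}
    (hc : 0 ≤ c) (hH : ∀ v, (H.degree v : ℝ) ≤ c * G.degree (f v)) (U Z : Finset W) :
    (eBetween G (U.map f) (Z.map f) : ℝ) ≤ eBetween (G.comap f \ H) U Z +
      c * (2 * eIn G (U.map f) + eBetween G (U.map f) (U.map f)ᶜ) := by
  have eBetween_le : (eBetween H U Z : ℝ) ≤
      c * (2 * eIn G (U.map f) + eBetween G (U.map f) (U.map f)ᶜ) :=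
    calc (eBetween H U Z : ℝ) ≤ ∑ u ∈ U, (H.degree u : ℝ) := by
          exact_mod_cast eBetween_le_sum_degree H U Z
      _ ≤ ∑ u ∈ U, c * (G.degree (f u) : ℝ) := sum_le_sum fun u _ ↦ hH u
      _ = c * (∑ u ∈ U.map f, G.degree u : ℕ) := by
          rw [← mul_sum, sum_map]
          push_cast
          rfl
      _ ≤ _ := by
          gcongr
          exact_mod_cast sum_degree_le G (U.map f)
  have eBetween_map_le : (eBetween G (U.map f) (Z.map f) : ℝ) ≤
      eBetween (G.comap f \ H) U Z + eBetween H U Z := by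
    rw [← eBetween_comap]
    exact_mod_cast eBetween_le_eBetween_sdiff_add (G.comap f) H U Z
  linarith

end Subgraphs

section TypicalGraphs

variable {n : ℕ} {p ε β : ℝ} {G : SimpleGraph (Fin n)}

lemma CutConcentrated.le_eBetween {δ a b : ℝ} (hG : CutConcentrated p δ a b G)
    {U W : Finset (Fin n)} (hUW : Disjoint U W) (hU : a ≤ #U) (hW : b ≤ #W) :
    (1 - δ) * (#U * #W * p) ≤ eBetween G U W := by
  linarith [(abs_le.1 (hG U W hUW hU hW)).1]

lemma CutConcentrated.eBetween_le {δ a b : ℝ} (hG : CutConcentrated p δ a b G)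
    {U W : Finset (Fin n)} (hUW : Disjoint U W) (hU : a ≤ #U) (hW : b ≤ #W) :
    eBetween G U W ≤ (1 + δ) * (#U * #W * p) := by
  linarith [(abs_le.1 (hG U W hUW hU hW)).2]

lemma natCast_card_compl (U : Finset (Fin n)) : (#Uᶜ : ℝ) = n - #U := by
  rw [compl_eq_univ_sdiff, cast_card_sdiff (subset_univ U), card_univ, Fintype.card_fin]

-- `⌈a⌉` vertices of degree less than `t` would send too few edges to their complement.
lemma CutConcentrated.card_lowDegSet_lt {δ a b t : ℝ} (hG : CutConcentrated p δ a b G)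
    (hp : 0 ≤ p) (hδ : δ ≤ 1) (ha : 0 < a) (hab : a + b + 1 ≤ n)
    (ht : t ≤ (1 - δ) * (b * p)) : (#(lowDegSet n t G) : ℝ) < a := by
  by_contra! h
  obtain ⟨U, hUD, hU⟩ := exists_subset_card_eq (Nat.ceil_le.2 h)
  have a_le : a ≤ #U := hU ▸ Nat.le_ceil a
  have b_le : b ≤ #Uᶜ := by
    rw [natCast_card_compl, hU]
    linarith [Nat.ceil_lt_add_one ha.le]
  have U_nonempty : U.Nonempty := card_pos.1 (Nat.cast_pos.1 (ha.trans_le a_le))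
  have lt_self : (eBetween G U Uᶜ : ℝ) < eBetween G U Uᶜ :=
    calc (eBetween G U Uᶜ : ℝ) ≤ ∑ u ∈ U, (G.degree u : ℝ) := by
          exact_mod_cast eBetween_le_sum_degree G U Uᶜ
      _ < ∑ _ ∈ U, t := sum_lt_sum_of_nonempty U_nonempty fun u hu ↦ (mem_filter.1 (hUD hu)).2
      _ = #U * t := by rw [sum_const, nsmul_eq_mul]
      _ ≤ #U * ((1 - δ) * (#Uᶜ * p)) := by
          gcongr
          refine ht.trans ?_
          gcongr
      _ = (1 - δ) * (#U * #Uᶜ * p) := by ring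
      _ ≤ eBetween G U Uᶜ := hG.le_eBetween disjoint_compl_right a_le b_le
  exact lt_irrefl _ lt_self

lemma LowDegScattered.le_degree_of_comap_le_sup {W : Type*} [Fintype W] {t c : ℝ}
    (hG : LowDegScattered t G) (hc : c ≤ 1) (f : W ↪ Fin n)
    (hf : ∀ x, x ∈ Set.range f ↔ x ∉ lowDegSet n t G) {K H : SimpleGraph W}
    (h : G.comap f ≤ K ⊔ H) {v : W} (hH : (H.degree v : ℝ) ≤ c * G.degree (f v)) :
    (1 - c) * t - 1 ≤ K.degree v := by
  have le_degree : t ≤ G.degree (f v) := by simpa [lowDegSet] using (hf (f v)).1 ⟨v, rfl⟩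
  have degree_le : (G.degree (f v) : ℝ) ≤ K.degree v + H.degree v + 1 := by
    exact_mod_cast (degree_le_of_comap_le_sup f h (fun x ↦ (hf x).2) v).trans
      (Nat.add_le_add_left (hG (f v)) _)
  linarith [mul_le_mul_of_nonneg_left le_degree (sub_nonneg.2 hc)]

/-- The properties of a typical random graph from which quasi-randomness is deduced: no vertex has
two neighbours of low degree, vertex sets of the two sizes in the definition of quasi-randomness are
sparse, and the edge distribution between linear sized sets has relative error at most `δ`. -/
structure IsTypical (p β δ : ℝ) (G : SimpleGraph (Fin n)) : Prop where
  lowDegScattered : LowDegScattered (n * p / 100) G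
  locallySparse_small : LocallySparse ((n : ℝ) ^ (0.11 : ℝ) * Real.log n)
    ((n * p) ^ (0.13 : ℝ)) G
  locallySparse_linear : LocallySparse (12 * β * n) (50 * β * (n * p)) G
  cutConcentrated : CutConcentrated p δ (β / 2 * n) (1 / 4 * n) G

/- The cut has at least about `#U * n * p / 3` edges in `G`. As `U` spans few edges, the degrees
in `U` sum to about `#U * n * p`, and `H` contains less than a third of that. -/
lemma IsTypical.mul_le_eBetween_comap_sdiff {W : Type*} [Fintype W] (hG : IsTypical p β (ε / 10) G)
    (hp : 0 ≤ p) (hε₀ : 0 < ε) (hε : ε ≤ 1 / 3) (hβ : β ≤ ε / 1000) (f : W ↪ Fin n)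
    {H : SimpleGraph W} (hH : ∀ v, (H.degree v : ℝ) ≤ (1 / 3 - ε) * G.degree (f v))
    {U Z : Finset W} (hUZ : Disjoint U Z) (hU₀ : 0 < #U) (hU₁ : β / 2 * n ≤ #U)
    (hU₂ : #U ≤ β * n) (hZ : (1 / 3 - 28 * β) * n ≤ #Z) :
    ε / 4 * (#U * (n * p)) ≤ eBetween (G.comap f \ H) U Z := by
  have hn : (0 : ℝ) ≤ n := n.cast_nonneg
  have hu : (0 : ℝ) < #U := Nat.cast_pos.2 hU₀
  have hβn : 0 < β * n := hu.trans_le hU₂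
  have hβ₀ : 0 < β := pos_of_mul_pos_left hβn hn
  have βn_le : β * n ≤ 1 / 3000 * n := by gcongr; linarith
  have card_compl_map : (#(U.map f)ᶜ : ℝ) = n - #U := by rw [natCast_card_compl, card_map]
  have lower : (1 - ε / 10) * (#U * ((1 / 3 - 28 * β) * n) * p) ≤
      eBetween G (U.map f) (Z.map f) := by
    refine le_trans ?_ (hG.cutConcentrated.le_eBetween ((disjoint_map f).2 hUZ)
      (by rwa [card_map]) (by rw [card_map]; linarith))
    have one_sub_nonneg : 0 ≤ 1 - ε / 10 := by linarith
    rw [card_map, card_map]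
    gcongr
  have upper : (eBetween G (U.map f) (U.map f)ᶜ : ℝ) ≤ (1 + ε / 10) * (#U * n * p) := by
    refine (hG.cutConcentrated.eBetween_le disjoint_compl_right
      (by rwa [card_map]) (by rw [card_compl_map]; linarith)).trans ?_
    rw [card_compl_map, card_map]
    gcongr
    linarith
  have inner : (eIn G (U.map f) : ℝ) ≤ 50 * β * (n * p) * #U := by
    simpa only [card_map] using hG.locallySparse_linear (U.map f) (by rw [card_map]; linarith)
  have hc : 0 ≤ 1 / 3 - ε := by linarith
  have coefficient_le : ε / 4 ≤ (1 - ε / 10) * (1 / 3 - 28 * β) -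
      (1 / 3 - ε) * (2 * (50 * β) + (1 + ε / 10)) := by
    nlinarith [mul_pos hε₀ hβ₀, mul_pos hε₀ hε₀]
  calc ε / 4 * (#U * (n * p))
      ≤ ((1 - ε / 10) * (1 / 3 - 28 * β) -
          (1 / 3 - ε) * (2 * (50 * β) + (1 + ε / 10))) * (#U * (n * p)) := by gcongr
    _ = (1 - ε / 10) * (#U * ((1 / 3 - 28 * β) * n) * p) -
          (1 / 3 - ε) * (2 * (50 * β * (n * p) * #U) + (1 + ε / 10) * (#U * n * p)) := by ring
    _ ≤ eBetween G (U.map f) (Z.map f) -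
          (1 / 3 - ε) * (2 * eIn G (U.map f) + eBetween G (U.map f) (U.map f)ᶜ) := by gcongr
    _ ≤ eBetween (G.comap f \ H) U Z := sub_le_iff_le_add.2 (eBetween_map_le f hc hH U Z)

lemma IsTypical.mul_log_log_le_eBetween_comap_sdiff {W : Type*} [Fintype W]
    (hG : IsTypical p β (ε / 10) G) (hp : 0 ≤ p) (hε₀ : 0 < ε) (hε : ε ≤ 1 / 3)
    (hβ₀ : 0 < β) (hβ : β ≤ ε / 1000) (hn : 10 ≤ β * n)
    (hlog : Real.log (Real.log n) ≤ ε * β / 8 * (n * p)) (f : W ↪ Fin n)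
    {H : SimpleGraph W} (hH : ∀ v, (H.degree v : ℝ) ≤ (1 / 3 - ε) * G.degree (f v)) {m : ℕ}
    (hm₁ : (1 - β) * n ≤ m) (hm₂ : m ≤ n) {U Z : Finset W} (hUZ : Disjoint U Z)
    (hU : #U = ⌊β * m⌋₊) (hZ : #Z = ⌊(1 / 3 - 27 * β) * m⌋₊) :
    m * Real.log (Real.log m) ≤ eBetween (G.comap f \ H) U Z := by
  have hm₂' : (m : ℝ) ≤ n := Nat.cast_le.2 hm₂
  have βn_le : β * n ≤ 1 / 3000 * n := by gcongr; linarith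
  have ββn_le : β * (β * n) ≤ 1 / 3000 * (β * n) := by gcongr; linarith
  have exp_le : Real.exp 1 ≤ m := by linarith [Real.exp_one_lt_three]
  have m_pos : (0 : ℝ) < m := (Real.exp_pos 1).trans_le exp_le
  have one_le_log : 1 ≤ Real.log m :=
    (Real.le_log_iff_exp_le m_pos).2 exp_le
  have le_U : β / 2 * n ≤ #U := by
    rw [hU]
    linarith [Nat.lt_floor_add_one (β * m), mul_le_mul_of_nonneg_left hm₁ hβ₀.le]
  have U_le : (#U : ℝ) ≤ β * n := by
    rw [hU]
    exact (Nat.floor_le (by positivity)).trans (by gcongr)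
  have le_Z : (1 / 3 - 28 * β) * n ≤ #Z := by
    rw [hZ]
    have coefficient_nonneg : 0 ≤ 1 / 3 - 27 * β := by linarith
    linarith [Nat.lt_floor_add_one ((1 / 3 - 27 * β) * m),
      mul_nonneg hβ₀.le (mul_nonneg hβ₀.le n.cast_nonneg),
      mul_le_mul_of_nonneg_left hm₁ coefficient_nonneg]
  have U_pos : 0 < #U := (Nat.cast_pos (α := ℝ)).1 (by linarith)
  calc m * Real.log (Real.log m)
      ≤ n * Real.log (Real.log n) := by
        gcongr
        exact Real.log_nonneg one_le_log
    _ ≤ n * (ε * β / 8 * (n * p)) := by gcongr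
    _ = ε / 4 * (β / 2 * n * (n * p)) := by ring
    _ ≤ ε / 4 * (#U * (n * p)) := by gcongr
    _ ≤ eBetween (G.comap f \ H) U Z :=
        hG.mul_le_eBetween_comap_sdiff hp hε₀ hε hβ f hH hUZ U_pos le_U U_le le_Z

lemma IsTypical.quasiRandom (hG : IsTypical p β (ε / 10) G) (hp : 0 ≤ p) (hε₀ : 0 < ε)
    (hε : ε ≤ 1 / 3) (hβ₀ : 0 < β) (hβ : β ≤ ε / 1000) (hd : 100 ≤ ε * (n * p))
    (hn : 10 ≤ β * n) (hlog : Real.log (Real.log n) ≤ ε * β / 8 * (n * p))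
    {S : Finset (Fin n)} (hS : S = univ \ lowDegSet n (n * p / 100) G)
    {H : SimpleGraph (S : Set (Fin n))}
    (hH : ∀ v, (H.degree v : ℝ) ≤ (1 / 3 - ε) * G.degree (v : Fin n)) :
    QuasiRandom (G.induce (S : Set (Fin n)) \ H) #S (n * p) β := by
  let f : (S : Set (Fin n)) ↪ Fin n := .subtype _
  have βn_le : β * n ≤ 1 / 3000 * n := by gcongr; linarith
  have card_lowDegSet_lt : (#(lowDegSet n (n * p / 100) G) : ℝ) < β / 2 * n := by
    refine hG.cutConcentrated.card_lowDegSet_lt hp (by linarith) (by linarith) (by linarith) ?_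
    nlinarith [mul_nonneg n.cast_nonneg hp]
  have card_S : (#S : ℝ) = n - #(lowDegSet n (n * p / 100) G) :=
    hS ▸ natCast_card_compl _
  have card_S_le : #S ≤ n := by simpa using card_le_univ S
  have card_S_le' : (#S : ℝ) ≤ n := Nat.cast_le.2 card_S_le
  have sdiff_le_comap : G.induce (S : Set (Fin n)) \ H ≤ G.comap f := sdiff_le
  refine ⟨fun v ↦ ?_, ?_, ?_, fun U Z hUZ hU hZ ↦ ?_⟩
  · refine le_trans ?_ (hG.lowDegScattered.le_degree_of_comap_le_sup (by linarith)
      f (by simp [f, hS]) le_sdiff_sup (hH v))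
    linarith
  · refine hG.locallySparse_small.of_le_comap f sdiff_le_comap ?_
    have card_S_pos : (0 : ℝ) < #S := by linarith
    gcongr
  · refine hG.locallySparse_linear.of_le_comap f sdiff_le_comap ?_
    gcongr
  · exact hG.mul_log_log_le_eBetween_comap_sdiff hp hε₀ hε hβ₀ hβ hn hlog f hH
      (by linarith) card_S_le hUZ hU hZ

variable {p : ℕ → ℝ}

lemma whp_isTypical (hp : ∀ n, p n ∈ Set.Icc (0 : ℝ) 1)
    (hlog : ∀ᶠ n : ℕ in atTop, Real.log n ≤ n * p n) {β δ : ℝ} (hβ : 0 < β) (hδ₀ : 0 < δ)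
    (hδ₂ : δ ≤ 2) : WHP p fun n G ↦ IsTypical (p n) β δ G := by
  have hd : Tendsto (fun n : ℕ ↦ n * p n) atTop atTop :=
    tendsto_atTop_mono' atTop hlog tendsto_log_natCast
  have sparse_small := whp_locallySparse_rpow_mul_log hp hd (a := 0.11) (b := 0.13)
    (by norm_num) (by norm_num) (by norm_num)
  have sparse_linear := whp_locallySparse_mul hp hd (c := 12 * β) (K := 50 * β)
    (by positivity) (by nlinarith [Real.exp_one_lt_three])
  have cut := whp_cutConcentrated hp hd hδ₀ hδ₂ (a := β / 2) (b := 1 / 4)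
    (by positivity) (by norm_num)
  exact (((whp_lowDegScattered hp hlog).and hp sparse_small).and hp
    (sparse_linear.and hp cut)).mono hp
      (Eventually.of_forall fun n G h ↦ ⟨h.1.1, h.1.2, h.2.1, h.2.2⟩)

lemma eventually_log_log_le_mul (hlog : ∀ᶠ n : ℕ in atTop, Real.log n ≤ n * p n) {c : ℝ}
    (hc : 0 < c) : ∀ᶠ n : ℕ in atTop, Real.log (Real.log n) ≤ c * (n * p n) := by
  have log_le : ∀ᶠ x : ℝ in atTop, Real.log x ≤ c * x := by
    filter_upwards [Real.isLittleO_log_id_atTop.bound hc, eventually_ge_atTop 0] with x hx hx₀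
    rw [id, Real.norm_of_nonneg hx₀] at hx
    exact (Real.le_norm_self _).trans hx
  filter_upwards [tendsto_log_natCast.eventually log_le, hlog] with n hn hn'
  exact hn.trans (by gcongr)

end TypicalGraphs

/-- Lemma 4.5: for every `ε > 0` there is `β₀ > 0` such that for `0 < β ≤ β₀` and
`p ≥ ln n / n`, w.h.p.: for every spanning subgraph `H₁` of `G₁ = G[V ∖ D_t(G)]`
(`t = np/100`) with `d_{H₁}(v) ≤ (1/3 - ε) d_G(v)` for all `v`, the graph `G₁ - H₁`
is `(n₁, np, β)`-quasi-random. -/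
theorem stmt11 (ε : ℝ) (hε : 0 < ε) :
    ∃ β0 : ℝ, 0 < β0 ∧ ∀ β : ℝ, 0 < β → β ≤ β0 →
      ∀ p : ℕ → ℝ, (∀ n, 0 ≤ p n) → (∀ n, p n ≤ 1) → (∀ n : ℕ, Real.log n / n ≤ p n) →
      WHP p (fun n G =>
        ∀ H1 : SimpleGraph ((Finset.univ \ lowDegSet n (n * p n / 100) G : Finset (Fin n)) :
            Set (Fin n)),
          H1 ≤ G.induce ((Finset.univ \ lowDegSet n (n * p n / 100) G : Finset (Fin n)) :
            Set (Fin n)) →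
          (∀ v, (H1.degree v : ℝ) ≤ (1 / 3 - ε) * (G.degree ↑v : ℝ)) →
          QuasiRandom
            (G.induce ((Finset.univ \ lowDegSet n (n * p n / 100) G : Finset (Fin n)) :
              Set (Fin n)) \ H1)
            (Finset.univ \ lowDegSet n (n * p n / 100) G).card ((n : ℝ) * p n) β) := by
  obtain ⟨ε', hε'₀, hε'ε, hε'⟩ : ∃ ε' : ℝ, 0 < ε' ∧ ε' ≤ ε ∧ ε' ≤ 1 / 3 :=
    ⟨min ε (1 / 3), lt_min hε (by norm_num), min_le_left .., min_le_right ..⟩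
  refine ⟨ε' / 1000, by positivity, fun β hβ₀ hβ p hp₀ hp₁ hp ↦ ?_⟩
  have hlog := eventually_log_le_mul hp
  have hd : Tendsto (fun n : ℕ ↦ n * p n) atTop atTop :=
    tendsto_atTop_mono' atTop hlog tendsto_log_natCast
  have hp₀₁ (n : ℕ) : p n ∈ Set.Icc (0 : ℝ) 1 := ⟨hp₀ n, hp₁ n⟩
  refine (whp_isTypical hp₀₁ hlog hβ₀ (δ := ε' / 10) (by positivity) (by linarith)).mono hp₀₁ ?_
  filter_upwards [(hd.const_mul_atTop hε'₀).eventually_ge_atTop 100,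
    (tendsto_natCast_atTop_atTop.const_mul_atTop hβ₀).eventually_ge_atTop 10,
    eventually_log_log_le_mul hlog (c := ε' * β / 8) (by positivity)]
    with n hdn hn hloglog G hG H _ hH
  exact hG.quasiRandom (hp₀ n) hε'₀ hε' hβ₀ hβ hdn hn hloglog rfl fun v ↦ (hH v).trans (by gcongr)
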